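/- Fix α ∈ (0,1]. If either n ≥ 3 and k ≥ 6, or n ≥ 4 and k ≥ 4, then there exists a non-negative polynomial P ∈ C^{k,α}(ℝⁿ) that is not a finite sum of squares of functions in C^{(k+α)/2}(ℝⁿ). -/

import Mathlib

open MvPolynomial

/-- Membership in the half-regular Hölder space `C^{(k+α)/2}(ℝⁿ)`:
`C^{k/2, α/2}` for `k` even, `C^{(k−1)/2, (1+α)/2}` for `k` odd. -/
def HalfRegular {n : ℕ} (k : ℕ) (α : ℝ) (g : EuclideanSpace ℝ (Fin n) → ℝ) : Prop :=
  if Even k then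
    ContDiff ℝ ((k / 2 : ℕ) : ℕ∞) g ∧ ∃ L : ℝ, ∀ x y,
      ‖iteratedFDeriv ℝ (k / 2) g x - iteratedFDeriv ℝ (k / 2) g y‖ ≤
        L * ‖x - y‖ ^ (α / 2)
  else
    ContDiff ℝ (((k - 1) / 2 : ℕ) : ℕ∞) g ∧ ∃ L : ℝ, ∀ x y,
      ‖iteratedFDeriv ℝ ((k - 1) / 2) g x - iteratedFDeriv ℝ ((k - 1) / 2) g y‖ ≤
        L * ‖x - y‖ ^ ((1 + α) / 2)

/-!
A form of degree `2 * d` that is a sum of squares of `C^d` functions `g j` is already a sum of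
squares of forms of degree `d`: every `g j` is `O(‖x‖ ^ d)` along lines through the origin, so its
Taylor expansion there starts in degree `d`, and the leading terms do the job. It remains to produce
nonnegative forms that are not sums of squares of forms, as in Hilbert's theorem. Robinson's sextic
and quartic vanish on a grid with one point removed and are positive at that point. In a sum of
squares each summand would vanish on the grid except at that point, which by the Alon–Füredi theorem
takes a larger degree than `3`, respectively `2`.
-/

open Filter Topology Asymptotics
open scoped Nat Finset

section AlonFuredi

variable {K σ : Type*} [Field K]

lemma sum_pow_div_prod_sub_eq_zero [DecidableEq K] (s : Finset K) {a : ℕ} (ha : a < #s - 1) :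
    ∑ x ∈ s, x ^ a / ∏ y ∈ s.erase x, (x - y) = 0 := by
  have hdeg : (Polynomial.X ^ a : Polynomial K).degree < #s := by
    rw [Polynomial.degree_X_pow]
    exact_mod_cast ha.trans_le (Nat.sub_le _ _)
  simpa [Polynomial.coeff_X_pow, ha.ne'] using
    (Lagrange.coeff_eq_sum (Set.injOn_id (s : Set K)) hdeg).symm

lemma sum_piFinset_eval_div_prod_sub_eq_zero [Fintype σ] [DecidableEq σ] [DecidableEq K]
    {q : MvPolynomial σ K} {S : σ → Finset K} (hq : q.totalDegree < ∑ i, (#(S i) - 1)) :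
    ∑ y ∈ Fintype.piFinset S, eval y q / ∏ i, ∏ z ∈ (S i).erase (y i), (y i - z) = 0 := by
  simp only [eval_eq', Finset.sum_div]
  rw [Finset.sum_comm]
  refine Finset.sum_eq_zero fun e he => ?_
  have hlt : ∑ i, e i < ∑ i, (#(S i) - 1) := by
    refine lt_of_le_of_lt ?_ hq
    simpa [Finsupp.sum_fintype] using le_totalDegree he
  obtain ⟨i, -, hi⟩ := Finset.exists_lt_of_sum_lt hlt
  calc ∑ y ∈ Fintype.piFinset S,
        (q.coeff e * ∏ i, y i ^ e i) / ∏ i, ∏ z ∈ (S i).erase (y i), (y i - z)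
      = q.coeff e * ∏ i, ∑ x ∈ S i, x ^ e i / ∏ z ∈ (S i).erase x, (x - z) := by
        simp only [Finset.prod_univ_sum, Finset.mul_sum, Finset.prod_div_distrib, mul_div_assoc]
    _ = 0 := by
        rw [Finset.prod_eq_zero (Finset.mem_univ i) (sum_pow_div_prod_sub_eq_zero (S i) hi),
          mul_zero]

/-- The **Alon–Füredi theorem** for grids with one point removed. -/
theorem sum_card_sub_one_le_totalDegree [Fintype σ] {q : MvPolynomial σ K} {S : σ → Finset K}
    {p : σ → K} (hpS : ∀ i, p i ∈ S i) (hq : ∀ y, (∀ i, y i ∈ S i) → y ≠ p → eval y q = 0)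
    (hp : eval p q ≠ 0) : ∑ i, (#(S i) - 1) ≤ q.totalDegree := by
  classical
  by_contra! hdeg
  have hsum := sum_piFinset_eval_div_prod_sub_eq_zero hdeg
  rw [Finset.sum_eq_single_of_mem p (Fintype.mem_piFinset.2 hpS) fun y hy hyp => by
    rw [hq y (Fintype.mem_piFinset.1 hy) hyp, zero_div]] at hsum
  refine div_ne_zero hp (Finset.prod_ne_zero_iff.2 fun i _ => Finset.prod_ne_zero_iff.2
    fun z hz => sub_ne_zero.2 (Finset.ne_of_mem_erase hz).symm) hsum

end AlonFuredi

/-- `P` is a sum of squares of forms of degree `d`, as in Hilbert's theorem on nonnegative forms. -/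
def IsSumSqForms {R σ : Type*} [CommSemiring R] (d : ℕ) (P : MvPolynomial σ R) : Prop :=
  ∃ (m : ℕ) (q : Fin m → MvPolynomial σ R), (∀ j, (q j).IsHomogeneous d) ∧ P = ∑ j, q j ^ 2

lemma IsSumSqForms.eval_eq_zero_of_grid {K σ : Type*} [Field K] [LinearOrder K]
    [IsStrictOrderedRing K] [Fintype σ] {d : ℕ} {P : MvPolynomial σ K} (hP : IsSumSqForms d P)
    {S : σ → Finset K} {p : σ → K} (hpS : ∀ i, p i ∈ S i) (hd : d < ∑ i, (#(S i) - 1))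
    (hzero : ∀ y, (∀ i, y i ∈ S i) → y ≠ p → eval y P = 0) : eval p P = 0 := by
  obtain ⟨m, q, hq, rfl⟩ := hP
  have hqzero (j : Fin m) (y : σ → K) (hy : ∀ i, y i ∈ S i) (hyp : y ≠ p) : eval y (q j) = 0 := by
    have := hzero y hy hyp
    simp only [map_sum, map_pow] at this
    exact pow_eq_zero_iff two_ne_zero |>.1 <|
      (Finset.sum_eq_zero_iff_of_nonneg fun _ _ => sq_nonneg _).1 this j (Finset.mem_univ j)
  have hqp (j : Fin m) : eval p (q j) = 0 := by
    by_contra hne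
    exact hd.not_ge <|
      (sum_card_sub_one_le_totalDegree hpS (hqzero j) hne).trans (hq j).totalDegree_le
  simp [hqp]

section LeadingTerm

variable {E F : Type*} [NormedAddCommGroup E] [NormedSpace ℝ E] [NormedAddCommGroup F]
  [NormedSpace ℝ F]

lemma tendsto_inv_pow_smul_of_iteratedDeriv_eq_zero {n : ℕ} {f : ℝ → F} {a : ℝ}
    (hf : ContDiff ℝ n f) (hzero : ∀ i < n, iteratedDeriv i f a = 0) :
    Tendsto (fun t => ((t - a) ^ n)⁻¹ • f t) (𝓝[≠] a) (𝓝 ((n ! : ℝ)⁻¹ • iteratedDeriv n f a)) := by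
  have htaylor (t : ℝ) : taylorWithinEval f n Set.univ a t =
      (t - a) ^ n • (n ! : ℝ)⁻¹ • iteratedDeriv n f a := by
    rw [taylor_within_apply, Finset.sum_range_succ, Finset.sum_eq_zero, zero_add,
      iteratedDerivWithin_univ, mul_comm, mul_smul]
    intro i hi
    rw [iteratedDerivWithin_univ, hzero i (Finset.mem_range.1 hi), smul_zero]
  have hlim := (taylor_tendsto convex_univ (Set.mem_univ a) hf.contDiffOn).mono_left
    (nhdsWithin_mono a (Set.subset_univ {a}ᶜ))
  rw [← tendsto_sub_nhds_zero_iff]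
  refine hlim.congr' ?_
  filter_upwards [self_mem_nhdsWithin] with t ht
  rw [htaylor, smul_sub, inv_smul_smul₀ (pow_ne_zero n (sub_ne_zero.2 ht))]

lemma iteratedDeriv_eq_zero_of_isBigO_pow {n i : ℕ} {f : ℝ → F} {a : ℝ} (hf : ContDiff ℝ n f)
    (hO : f =O[𝓝[≠] a] fun t => (t - a) ^ n) (hi : i < n) : iteratedDeriv i f a = 0 := by
  induction i using Nat.strong_induction_on with
  | _ i ih =>
    have hlim := tendsto_inv_pow_smul_of_iteratedDeriv_eq_zero
      (hf.of_le (by exact_mod_cast hi.le)) fun j hj => ih j hj (hj.trans hi)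
    have ho : f =o[𝓝[≠] a] fun t => (t - a) ^ i := by
      refine hO.trans_isLittleO ?_
      have : Tendsto (fun t : ℝ => t - a) (𝓝[≠] a) (𝓝 0) :=
        tendsto_sub_nhds_zero_iff.2 (tendsto_id.mono_left nhdsWithin_le_nhds)
      exact (isLittleO_pow_pow hi).comp_tendsto this
    have hzero := tendsto_nhds_unique hlim ho.tendsto_inv_smul_nhds_zero
    exact (smul_eq_zero.1 hzero).resolve_left (by positivity)

lemma tendsto_inv_pow_smul_of_isBigO_pow {n : ℕ} {f : ℝ → F} {a : ℝ} (hf : ContDiff ℝ n f)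
    (hO : f =O[𝓝[≠] a] fun t => (t - a) ^ n) :
    Tendsto (fun t => ((t - a) ^ n)⁻¹ • f t) (𝓝[≠] a) (𝓝 ((n ! : ℝ)⁻¹ • iteratedDeriv n f a)) :=
  tendsto_inv_pow_smul_of_iteratedDeriv_eq_zero hf fun _ =>
    iteratedDeriv_eq_zero_of_isBigO_pow hf hO

lemma iteratedDeriv_comp_smul_zero {n : ℕ} {g : E → F} (hg : ContDiff ℝ n g) (x : E) :
    iteratedDeriv n (fun t : ℝ => g (t • x)) 0 = iteratedFDeriv ℝ n g 0 fun _ => x := by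
  have := ((ContinuousLinearMap.id ℝ ℝ).smulRight x).iteratedFDeriv_comp_right hg 0 le_rfl
  rw [iteratedDeriv_eq_iteratedFDeriv]
  simpa [Function.comp_def] using DFunLike.congr_fun this fun _ => 1

lemma eq_sum_sq_iteratedFDeriv_of_eq_sum_sq {ι : Type*} [Fintype ι] {d : ℕ} {f : E → ℝ}
    {g : ι → E → ℝ} (hom : ∀ (t : ℝ) x, f (t • x) = t ^ (2 * d) * f x)
    (hg : ∀ j, ContDiff ℝ d (g j)) (hsum : ∀ x, f x = ∑ j, g j x ^ 2) (x : E) :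
    f x = ∑ j, ((d ! : ℝ)⁻¹ • iteratedFDeriv ℝ d (g j) 0 fun _ => x) ^ 2 := by
  have hbound (j : ι) (t : ℝ) : |g j (t • x)| ≤ √(f x) * |t ^ d| := by
    rw [← Real.sqrt_sq_eq_abs (t ^ d), ← Real.sqrt_mul' _ (sq_nonneg _)]
    refine Real.abs_le_sqrt ?_
    calc g j (t • x) ^ 2 ≤ ∑ i, g i (t • x) ^ 2 :=
          Finset.single_le_sum (f := fun i => g i (t • x) ^ 2) (fun _ _ => sq_nonneg _)
            (Finset.mem_univ j)
      _ = f x * (t ^ d) ^ 2 := by rw [← hsum, hom, pow_mul', mul_comm]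
  have hlim (j : ι) : Tendsto (fun t : ℝ => (t ^ d)⁻¹ • g j (t • x)) (𝓝[≠] 0)
      (𝓝 ((d ! : ℝ)⁻¹ • iteratedFDeriv ℝ d (g j) 0 fun _ => x)) := by
    have hO : (fun t : ℝ => g j (t • x)) =O[𝓝[≠] 0] fun t => (t - 0) ^ d :=
      IsBigO.of_bound (√(f x)) (Eventually.of_forall fun t => by simpa using hbound j t)
    rw [← iteratedDeriv_comp_smul_zero (hg j)]
    have hline : ContDiff ℝ d fun t : ℝ => g j (t • x) :=
      (hg j).comp (contDiff_id.smul contDiff_const)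
    simpa only [sub_zero] using tendsto_inv_pow_smul_of_isBigO_pow hline hO
  refine tendsto_nhds_unique (tendsto_const_nhds.congr' ?_)
    (tendsto_finsetSum Finset.univ fun j _ => (hlim j).pow 2)
  filter_upwards [self_mem_nhdsWithin] with t ht
  have ht : t ≠ 0 := ht
  simp only [smul_eq_mul, mul_pow, ← Finset.mul_sum, ← hsum, hom, pow_mul']
  field_simp

lemma iteratedFDeriv_eq_of_homogeneous {d k : ℕ} {f : E → F} (hf : ContDiff ℝ k f)
    (hom : ∀ (t : ℝ) x, f (t • x) = t ^ d • f x) (hdk : d ≤ k) (x y : E) :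
    iteratedFDeriv ℝ k f x = iteratedFDeriv ℝ k f y := by
  suffices h : ∀ z, iteratedFDeriv ℝ k f z = (0 : ℝ) ^ (k - d) • iteratedFDeriv ℝ k f 0 by
    rw [h x, h y]
  intro z
  have hscale {t : ℝ} (ht : t ≠ 0) :
      t ^ (k - d) • iteratedFDeriv ℝ k f (t • z) = iteratedFDeriv ℝ k f z := by
    refine smul_right_injective _ (pow_ne_zero d ht) ?_
    have h := congrFun (iteratedFDeriv_comp_const_smul t hf) z
    simp only [hom] at h
    change t ^ d • t ^ (k - d) • _ = t ^ d • _
    rw [smul_smul, ← pow_add, Nat.add_sub_cancel' hdk, ← h]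
    exact iteratedFDeriv_const_smul_apply' hf.contDiffAt
  have hcont : Continuous fun t : ℝ => t ^ (k - d) • iteratedFDeriv ℝ k f (t • z) :=
    (continuous_pow _).smul ((hf.continuous_iteratedFDeriv le_rfl).comp (by fun_prop))
  have hlim := (hcont.tendsto 0).mono_left (nhdsWithin_le_nhds (s := {0}ᶜ))
  rw [zero_smul] at hlim
  refine tendsto_nhds_unique (tendsto_const_nhds.congr' ?_) hlim
  filter_upwards [self_mem_nhdsWithin] with t ht using (hscale ht).symm

end LeadingTerm

section PolynomialFunction

variable {R σ : Type*} [CommSemiring R]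

lemma eval_smul_of_isHomogeneous {d : ℕ} {P : MvPolynomial σ R} (hP : P.IsHomogeneous d)
    (t : R) (x : σ → R) : eval (t • x) P = t ^ d * eval x P := by
  rw [eval_eq, eval_eq, Finset.mul_sum]
  refine Finset.sum_congr rfl fun e he => ?_
  simp only [Pi.smul_apply, smul_eq_mul, mul_pow, Finset.prod_mul_distrib,
    Finset.prod_pow_eq_pow_sum, hP.degree_eq_sum_deg_support he]
  ring

lemma exists_isHomogeneous_eval_eq [Finite σ] {d : ℕ}
    (A : MultilinearMap R (fun _ : Fin d => σ → R) R) :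
    ∃ q : MvPolynomial σ R, q.IsHomogeneous d ∧ ∀ x, eval x q = A fun _ => x := by
  classical
  have := Fintype.ofFinite σ
  refine ⟨∑ r : Fin d → σ, C (A fun i => Pi.single (r i) 1) * ∏ i, X (r i),
    IsHomogeneous.sum _ _ _ fun r _ => ?_, fun x => ?_⟩
  · simpa using (isHomogeneous_C σ _).mul
      (IsHomogeneous.prod Finset.univ _ _ fun i _ => isHomogeneous_X R (r i))
  · conv_rhs => rw [pi_eq_sum_univ' x]
    simp only [MultilinearMap.map_sum, MultilinearMap.map_smul_univ, map_sum, map_mul, map_prod,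
      eval_C, eval_X, smul_eq_mul]
    exact Finset.sum_congr rfl fun r _ => mul_comm _ _

end PolynomialFunction

/-- `f` is a sum of squares of functions of class `C^d`. The Hölder condition on the derivatives of
order `d` is dropped: continuity is all that the extraction of leading terms needs. -/
def IsSumSqContDiff {E : Type*} [NormedAddCommGroup E] [NormedSpace ℝ E] (d : ℕ) (f : E → ℝ) :
    Prop :=
  ∃ (m : ℕ) (g : Fin m → E → ℝ), (∀ j, ContDiff ℝ d (g j)) ∧ ∀ x, f x = ∑ j, g j x ^ 2

namespace IsSumSqContDiff

variable {E F : Type*} [NormedAddCommGroup E] [NormedSpace ℝ E] [NormedAddCommGroup F]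
  [NormedSpace ℝ F] {d : ℕ} {f : F → ℝ}

lemma comp_continuousLinearMap (hf : IsSumSqContDiff d f) (L : E →L[ℝ] F) :
    IsSumSqContDiff d (f ∘ L) := by
  obtain ⟨m, g, hg, hsum⟩ := hf
  exact ⟨m, fun j => g j ∘ L, fun j => (hg j).comp L.contDiff, fun x => hsum (L x)⟩

theorem isSumSqForms {σ : Type*} [Fintype σ] {P : MvPolynomial σ ℝ}
    (hP : P.IsHomogeneous (2 * d)) (hsum : IsSumSqContDiff d fun x : σ → ℝ => eval x P) :
    IsSumSqForms d P := by
  obtain ⟨m, g, hg, hsum⟩ := hsum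
  choose q hq hqeval using fun j => exists_isHomogeneous_eval_eq
    ((d ! : ℝ)⁻¹ • iteratedFDeriv ℝ d (g j) 0).toMultilinearMap
  refine ⟨m, q, hq, MvPolynomial.funext fun x => ?_⟩
  rw [eq_sum_sq_iteratedFDeriv_of_eq_sum_sq (eval_smul_of_isHomogeneous hP) hg hsum x]
  simp [hqeval]

theorem isSumSqForms_of_rename {σ τ : Type*} [Fintype σ] [Finite τ] {P : MvPolynomial τ ℝ}
    {r : τ → σ} (hr : r.Injective) (hP : P.IsHomogeneous (2 * d))
    (hsum : IsSumSqContDiff d fun z : EuclideanSpace ℝ σ => eval (fun i => z i) (rename r P)) :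
    IsSumSqForms d P := by
  have := Fintype.ofFinite τ
  let L : (τ → ℝ) →L[ℝ] EuclideanSpace ℝ σ := LinearMap.toContinuousLinearMap <|
    (WithLp.linearEquiv 2 ℝ (σ → ℝ)).symm.toLinearMap ∘ₗ Function.ExtendByZero.linearMap ℝ r
  have hL (x : τ → ℝ) (i : τ) : L x (r i) = x i := by simp [L, hr.extend_apply]
  refine isSumSqForms hP ?_
  simpa only [Function.comp_def, eval_rename, hL] using hsum.comp_continuousLinearMap L

end IsSumSqContDiff

section Robinson

/-- Robinson's ternary sextic, a nonnegative form that is not a sum of squares of forms. It is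
Schur's cubic evaluated at the squares of the variables. -/
noncomputable def robinsonSextic : MvPolynomial (Fin 3) ℝ :=
  X 0 ^ 2 * (X 0 ^ 2 - X 1 ^ 2) * (X 0 ^ 2 - X 2 ^ 2) +
    X 1 ^ 2 * (X 1 ^ 2 - X 0 ^ 2) * (X 1 ^ 2 - X 2 ^ 2) +
    X 2 ^ 2 * (X 2 ^ 2 - X 0 ^ 2) * (X 2 ^ 2 - X 1 ^ 2)

/-- Robinson's quaternary quartic, a nonnegative form that is not a sum of squares of forms; the
last variable is the homogenizing one. -/
noncomputable def robinsonQuartic : MvPolynomial (Fin 4) ℝ :=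
  X 0 ^ 2 * (X 0 - X 3) ^ 2 + X 1 ^ 2 * (X 1 - X 3) ^ 2 + X 2 ^ 2 * (X 2 - X 3) ^ 2 +
    2 * (X 0 * X 1 * X 2 * (X 0 + X 1 + X 2 - 2 * X 3))

lemma robinsonSextic_isHomogeneous : robinsonSextic.IsHomogeneous 6 := by
  have hsq (i : Fin 3) : (X i ^ 2 : MvPolynomial (Fin 3) ℝ).IsHomogeneous 2 :=
    isHomogeneous_X_pow i 2
  have hterm (i j l : Fin 3) : (X i ^ 2 * (X i ^ 2 - X j ^ 2) * (X i ^ 2 - X l ^ 2) :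
      MvPolynomial (Fin 3) ℝ).IsHomogeneous 6 :=
    ((hsq i).mul ((hsq i).sub (hsq j))).mul ((hsq i).sub (hsq l))
  exact ((hterm 0 1 2).add (hterm 1 0 2)).add (hterm 2 0 1)

lemma robinsonQuartic_isHomogeneous : robinsonQuartic.IsHomogeneous 4 := by
  have hX (i : Fin 4) : (X i : MvPolynomial (Fin 4) ℝ).IsHomogeneous 1 := isHomogeneous_X ℝ i
  have hterm (i : Fin 4) : (X i ^ 2 * (X i - X 3) ^ 2 : MvPolynomial (Fin 4) ℝ).IsHomogeneous 4 :=
    ((hX i).pow 2).mul (((hX i).sub (hX 3)).pow 2)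
  have hlin : (X 0 + X 1 + X 2 - C 2 * X 3 : MvPolynomial (Fin 4) ℝ).IsHomogeneous 1 :=
    (((hX 0).add (hX 1)).add (hX 2)).sub ((hX 3).C_mul 2)
  exact (((hterm 0).add (hterm 1)).add (hterm 2)).add
    (((((hX 0).mul (hX 1)).mul (hX 2)).mul hlin).C_mul 2)

lemma schur_nonneg {u v w : ℝ} (hu : 0 ≤ u) (hv : 0 ≤ v) (hw : 0 ≤ w) :
    0 ≤ u * (u - v) * (u - w) + v * (v - u) * (v - w) + w * (w - u) * (w - v) := by
  have sorted {u v w : ℝ} (hw : 0 ≤ w) (hvw : w ≤ v) (huv : v ≤ u) :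
      0 ≤ u * (u - v) * (u - w) + v * (v - u) * (v - w) + w * (w - u) * (w - v) := by
    have h₁ := mul_nonneg (mul_nonneg hw (sub_nonneg.2 (hvw.trans huv))) (sub_nonneg.2 hvw)
    have h₂ := mul_nonneg (sq_nonneg (u - v)) (by linarith : 0 ≤ u + v - w)
    linarith
  rcases le_total u v with h₁ | h₁ <;> rcases le_total v w with h₂ | h₂ <;>
    rcases le_total u w with h₃ | h₃ <;>
    grind

lemma robinsonSextic_nonneg (x : Fin 3 → ℝ) : 0 ≤ eval x robinsonSextic := by
  simpa [robinsonSextic] using schur_nonneg (sq_nonneg (x 0)) (sq_nonneg (x 1)) (sq_nonneg (x 2))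

lemma robinsonQuartic_nonneg (x : Fin 4 → ℝ) : 0 ≤ eval x robinsonQuartic := by
  simp only [robinsonQuartic, map_add, map_mul, map_sub, map_pow, eval_X, map_ofNat]
  generalize x 0 = u, x 1 = v, x 2 = w, x 3 = s
  rcases (by positivity : 0 ≤ u ^ 2 + v ^ 2 + w ^ 2).eq_or_lt with h | h
  · obtain rfl : u = 0 := by nlinarith [sq_nonneg u, sq_nonneg v, sq_nonneg w]
    obtain rfl : v = 0 := by nlinarith [sq_nonneg v, sq_nonneg w]
    obtain rfl : w = 0 := by nlinarith [sq_nonneg w]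
    simp
  · refine nonneg_of_mul_nonneg_right ?_ h
    -- The multiplier is the coefficient of `s ^ 2`: complete the square in `s`.
    calc (0 : ℝ) ≤ ((u ^ 2 + v ^ 2 + w ^ 2) * s - (u ^ 3 + v ^ 3 + w ^ 3 + 2 * u * v * w)) ^ 2 +
          ((u - v) * (v - w) * (w - u)) ^ 2 + 2 * (u * v * w) ^ 2 := by positivity
      _ = _ := by ring

lemma eval_robinsonSextic_eq_zero_of_mem_grid {y : Fin 3 → ℝ}
    (hy : ∀ i, y i ∈ (![{-1, 0, 1}, {-1, 0, 1}, {1}] : Fin 3 → Finset ℝ) i) (hne : y ≠ ![0, 0, 1]) :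
    eval y robinsonSextic = 0 := by
  obtain ⟨a, b, c, rfl⟩ : ∃ a b c, y = ![a, b, c] := ⟨y 0, y 1, y 2, by ext i; fin_cases i <;> rfl⟩
  obtain ⟨ha, hb, rfl⟩ : (a = -1 ∨ a = 0 ∨ a = 1) ∧ (b = -1 ∨ b = 0 ∨ b = 1) ∧ c = 1 := by
    simpa [Fin.forall_fin_succ] using hy
  rcases ha with rfl | rfl | rfl <;> rcases hb with rfl | rfl | rfl <;>
    simp_all [robinsonSextic]

lemma eval_robinsonQuartic_eq_zero_of_mem_grid {y : Fin 4 → ℝ}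
    (hy : ∀ i, y i ∈ (![{0, 1}, {0, 1}, {0, 1}, {1}] : Fin 4 → Finset ℝ) i)
    (hne : y ≠ 1) : eval y robinsonQuartic = 0 := by
  obtain ⟨a, b, c, e, rfl⟩ : ∃ a b c e, y = ![a, b, c, e] :=
    ⟨y 0, y 1, y 2, y 3, by ext i; fin_cases i <;> rfl⟩
  obtain ⟨ha, hb, hc, rfl⟩ : (a = 0 ∨ a = 1) ∧ (b = 0 ∨ b = 1) ∧ (c = 0 ∨ c = 1) ∧ e = 1 := by
    simpa [Fin.forall_fin_succ] using hy
  rcases ha with rfl | rfl <;> rcases hb with rfl | rfl <;> rcases hc with rfl | rfl <;>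
    simp_all [robinsonQuartic, funext_iff, Fin.forall_fin_succ]

theorem not_isSumSqForms_robinsonSextic : ¬IsSumSqForms 3 robinsonSextic := fun h => by
  have hzero := h.eval_eq_zero_of_grid (p := ![0, 0, 1]) (by simp [Fin.forall_fin_succ])
    (by norm_num [Fin.sum_univ_succ]) fun _ => eval_robinsonSextic_eq_zero_of_mem_grid
  simp [robinsonSextic] at hzero

theorem not_isSumSqForms_robinsonQuartic : ¬IsSumSqForms 2 robinsonQuartic := fun h => by
  have hzero := h.eval_eq_zero_of_grid (p := 1) (by simp [Fin.forall_fin_succ])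
    (by norm_num [Fin.sum_univ_succ]) fun _ => eval_robinsonQuartic_eq_zero_of_mem_grid
  norm_num [robinsonQuartic] at hzero

end Robinson

lemma HalfRegular.contDiff {n k d : ℕ} {α : ℝ} {g : EuclideanSpace ℝ (Fin n) → ℝ}
    (hg : HalfRegular k α g) (hd : 2 * d ≤ k) : ContDiff ℝ d g := by
  unfold HalfRegular at hg
  split_ifs at hg with hk
  · exact hg.1.of_le (by norm_cast; omega)
  · exact hg.1.of_le (by norm_cast; grind)

lemma iteratedFDeriv_eval_eq_of_isHomogeneous {σ : Type*} [Fintype σ] {d k : ℕ}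
    {P : MvPolynomial σ ℝ} (hP : P.IsHomogeneous d) (hdk : d ≤ k) (x y : EuclideanSpace ℝ σ) :
    iteratedFDeriv ℝ k (fun z : EuclideanSpace ℝ σ => eval (fun i => z i) P) x =
      iteratedFDeriv ℝ k (fun z : EuclideanSpace ℝ σ => eval (fun i => z i) P) y := by
  refine iteratedFDeriv_eq_of_homogeneous (f := fun z : EuclideanSpace ℝ σ =>
    eval (fun i => z i) P) ?_ (fun t z => eval_smul_of_isHomogeneous hP t _) hdk x y
  exact (AnalyticOnNhd.eval_continuousLinearMap
    (EuclideanSpace.equiv σ ℝ : EuclideanSpace ℝ σ →L[ℝ] σ → ℝ) P).contDiff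

theorem stmt_17_general {n k : ℕ} (hnk : (3 ≤ n ∧ 6 ≤ k) ∨ (4 ≤ n ∧ 4 ≤ k)) :
    ∃ (d : ℕ) (P : MvPolynomial (Fin n) ℝ), 2 * d ≤ k ∧ P.IsHomogeneous (2 * d) ∧
      (∀ x : Fin n → ℝ, 0 ≤ eval x P) ∧
      ¬IsSumSqContDiff d fun z : EuclideanSpace ℝ (Fin n) => eval (fun i => z i) P := by
  rcases hnk with ⟨hn, hk⟩ | ⟨hn, hk⟩
  · refine ⟨3, rename (Fin.castLE hn) robinsonSextic, hk,
      robinsonSextic_isHomogeneous.rename_isHomogeneous, fun x => ?_, fun h => ?_⟩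
    · simpa only [eval_rename] using robinsonSextic_nonneg _
    · exact not_isSumSqForms_robinsonSextic <|
        h.isSumSqForms_of_rename (Fin.castLE_injective hn) robinsonSextic_isHomogeneous
  · refine ⟨2, rename (Fin.castLE hn) robinsonQuartic, hk,
      robinsonQuartic_isHomogeneous.rename_isHomogeneous, fun x => ?_, fun h => ?_⟩
    · simpa only [eval_rename] using robinsonQuartic_nonneg _
    · exact not_isSumSqForms_robinsonQuartic <|
        h.isSumSqForms_of_rename (Fin.castLE_injective hn) robinsonQuartic_isHomogeneous

/-- Theorem 7.5: for `n ≥ 3, k ≥ 6` or `n ≥ 4, k ≥ 4` there is a nonnegative polynomial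
in `C^{k,α}(ℝⁿ)` which is not a finite sum of squares of half-regular functions. -/
theorem stmt_17 {n k : ℕ} (α : ℝ) (hα : 0 < α) (hα1 : α ≤ 1)
    (hnk : (3 ≤ n ∧ 6 ≤ k) ∨ (4 ≤ n ∧ 4 ≤ k)) :
    ∃ P : MvPolynomial (Fin n) ℝ,
      (∀ x : Fin n → ℝ, 0 ≤ eval x P) ∧
      (∃ L : ℝ, ∀ x y : EuclideanSpace ℝ (Fin n),
        ‖iteratedFDeriv ℝ k (fun z : EuclideanSpace ℝ (Fin n) => eval (fun i => z i) P) x -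
          iteratedFDeriv ℝ k (fun z : EuclideanSpace ℝ (Fin n) => eval (fun i => z i) P) y‖ ≤
            L * ‖x - y‖ ^ α) ∧
      ¬∃ (m : ℕ) (g : Fin m → EuclideanSpace ℝ (Fin n) → ℝ),
        (∀ j, HalfRegular k α (g j)) ∧
          ∀ x : EuclideanSpace ℝ (Fin n), eval (fun i => x i) P = ∑ j, (g j x) ^ 2 := by
  obtain ⟨d, P, hdk, hP, hnonneg, hnot⟩ := stmt_17_general hnk
  exact ⟨P, hnonneg, ⟨0, fun x y => by simp [iteratedFDeriv_eval_eq_of_isHomogeneous hP hdk x y]⟩,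
    fun ⟨m, g, hg, hsum⟩ => hnot ⟨m, g, fun j => (hg j).contDiff hdk, hsum⟩⟩
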